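/- Let Ω ⊂ ℝ^n be a bounded domain, Γ ⊂ 𝕊^n an open convex set containing the positive definite cone K⁺ and closed under addition of matrices of K⁺, and A : Ω̄×ℝ×ℝ^n → 𝕊^n continuous, twice differentiable in p with D²_pA continuous and regular. Fix ū ∈ C²(Ω̄), δ̄ > 0 and M₁ > 0. Then there exist positive constants K and δ, depending only on n, Ω, A, ū, δ̄ and M₁, such that for every F ∈ C¹(Γ) satisfying F1 and F2 and every admissible u ∈ C²(Ω̄) with |u|_{1;Ω} ≤ M₁ for which M_u[ū](x) − δ̄I ∈ Γ for all x ∈ Ω̄, the function η = e^{K(ū−u)} satisfies, pointwise in Ω, Lη ≥ δ·𝒯(M[u]) + K e^{K(ū−u)} [ F(M_u[ū] − δ̄I) − F(M[u]) ]. (Lemma 2.1 (i), case (a): the barrier estimate (2.8).) -/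

import Mathlib

open scoped BigOperators

noncomputable section

/-- Gradient vector `Du(x)`. -/
noncomputable def pgrad (n : ℕ) (u : EuclideanSpace ℝ (Fin n) → ℝ)
    (x : EuclideanSpace ℝ (Fin n)) : Fin n → ℝ :=
  fun i => fderiv ℝ u x (EuclideanSpace.single i 1)

/-- Hessian matrix `D²u(x)`. -/
noncomputable def phess (n : ℕ) (u : EuclideanSpace ℝ (Fin n) → ℝ)
    (x : EuclideanSpace ℝ (Fin n)) : Matrix (Fin n) (Fin n) ℝ :=
  Matrix.of fun i j =>
    fderiv ℝ (fun y => fderiv ℝ u y (EuclideanSpace.single j 1)) x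
      (EuclideanSpace.single i 1)

/-- `A^k_{ij} = ∂A_{ij}/∂p_k`. -/
noncomputable def ApDeriv (n : ℕ)
    (A : EuclideanSpace ℝ (Fin n) → ℝ → (Fin n → ℝ) → Matrix (Fin n) (Fin n) ℝ)
    (x : EuclideanSpace ℝ (Fin n)) (z : ℝ) (p : Fin n → ℝ) (k i j : Fin n) : ℝ :=
  deriv (fun t : ℝ => A x z (p + t • (Pi.single k 1 : Fin n → ℝ)) i j) 0

/-- The augmented Hessian `M[u] = D²u − A(·,u,Du)`. -/
noncomputable def MA (n : ℕ)
    (A : EuclideanSpace ℝ (Fin n) → ℝ → (Fin n → ℝ) → Matrix (Fin n) (Fin n) ℝ)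
    (u : EuclideanSpace ℝ (Fin n) → ℝ) (x : EuclideanSpace ℝ (Fin n)) :
    Matrix (Fin n) (Fin n) ℝ :=
  phess n u x - A x (u x) (pgrad n u x)

/-- `M_u[ū] = D²ū − A(·,u,Dū)`. -/
noncomputable def MAw (n : ℕ)
    (A : EuclideanSpace ℝ (Fin n) → ℝ → (Fin n → ℝ) → Matrix (Fin n) (Fin n) ℝ)
    (u ubar : EuclideanSpace ℝ (Fin n) → ℝ) (x : EuclideanSpace ℝ (Fin n)) :
    Matrix (Fin n) (Fin n) ℝ :=
  phess n ubar x - A x (u x) (pgrad n ubar x)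

/-- The linearized operator `Lv = F^{ij}(M[u])(D_{ij}v − A^k_{ij}(·,u,Du)D_k v)`. -/
noncomputable def Lop (n : ℕ)
    (A : EuclideanSpace ℝ (Fin n) → ℝ → (Fin n → ℝ) → Matrix (Fin n) (Fin n) ℝ)
    (F' : Matrix (Fin n) (Fin n) ℝ → Matrix (Fin n) (Fin n) ℝ)
    (u v : EuclideanSpace ℝ (Fin n) → ℝ) (x : EuclideanSpace ℝ (Fin n)) : ℝ :=
  ∑ i, ∑ j, F' (MA n A u x) i j *
    (phess n v x i j -
      ∑ k, ApDeriv n A x (u x) (pgrad n u x) k i j * pgrad n v x k)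

/-- `𝒯(r) = Σ_i F^{ii}(r)`, the trace of the gradient matrix of `F`. -/
noncomputable def Tcal (n : ℕ)
    (F' : Matrix (Fin n) (Fin n) ℝ → Matrix (Fin n) (Fin n) ℝ)
    (r : Matrix (Fin n) (Fin n) ℝ) : ℝ :=
  ∑ i, F' r i i

lemma aux_compact {X : Type*} [TopologicalSpace X] {S : Set X} (hS : IsCompact S)
    {f g : X → ℝ} (hf : Continuous f) (hg : Continuous g) (hg0 : ∀ x ∈ S, 0 ≤ g x)
    (h : ∀ x ∈ S, g x = 0 → 0 < f x) :
    ∃ C : ℝ, 0 ≤ C ∧ ∀ x ∈ S, 0 ≤ f x + C * g x := by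
  obtain ⟨B, hB⟩ := hS.exists_bound_of_continuousOn hf.continuousOn
  have hS' : IsCompact (S ∩ {x | f x ≤ 0}) :=
    hS.inter_right (isClosed_le hf continuous_const)
  rcases (S ∩ {x | f x ≤ 0}).eq_empty_or_nonempty with he | hne
  · refine ⟨0, le_rfl, fun x hx => ?_⟩
    have : ¬ f x ≤ 0 := fun h' => by
      have : x ∈ S ∩ {x | f x ≤ 0} := ⟨hx, h'⟩
      simp [he] at this
    linarith
  · obtain ⟨x0, hx0, hmin⟩ := hS'.exists_isMinOn hne hg.continuousOn
    have hpos : 0 < g x0 := by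
      rcases (hg0 x0 hx0.1).lt_or_eq with h1 | h1
      · exact h1
      · have := h x0 hx0.1 h1.symm
        have h2 : f x0 ≤ 0 := hx0.2
        linarith
    have hB0 : 0 ≤ B := (norm_nonneg _).trans (hB x0 hx0.1)
    refine ⟨B / g x0, by positivity, fun x hx => ?_⟩
    by_cases hfx : f x ≤ 0
    · have h1 : g x0 ≤ g x := hmin ⟨hx, hfx⟩
      have h2 := hB x hx
      rw [Real.norm_eq_abs, abs_le] at h2
      have h3 : B ≤ B / g x0 * g x := by
        rw [div_mul_eq_mul_div, le_div_iff₀ hpos]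
        exact mul_le_mul_of_nonneg_left h1 hB0
      linarith
    · have := hg0 x hx
      have : 0 ≤ B / g x0 * g x := by positivity
      linarith

lemma aux_taylor {g g' g'' : ℝ → ℝ} (h1 : ∀ t, HasDerivAt g (g' t) t)
    (h2 : ∀ t, HasDerivAt g' (g'' t) t) {c : ℝ} (hc : ∀ t ∈ Set.Icc (0 : ℝ) 1, -c ≤ g'' t) :
    -(c / 2) ≤ g 1 - g 0 - g' 0 := by
  have m1 : MonotoneOn (fun t => g' t + c * t) (Set.Icc (0 : ℝ) 1) := by
    have hd : ∀ t, HasDerivAt (fun t => g' t + c * t) (g'' t + c * 1) t := fun t =>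
      (h2 t).add ((hasDerivAt_id t).const_mul c)
    refine monotoneOn_of_hasDerivWithinAt_nonneg (convex_Icc _ _)
      (fun t _ => (hd t).continuousAt.continuousWithinAt)
      (fun t _ => (hd t).hasDerivWithinAt) (fun t ht => ?_)
    have := hc t (interior_subset ht)
    linarith
  have m2 : MonotoneOn (fun t => g t - g' 0 * t + c / 2 * t ^ 2) (Set.Icc (0 : ℝ) 1) := by
    have hd : ∀ t, HasDerivAt (fun t => g t - g' 0 * t + c / 2 * t ^ 2)
        (g' t - g' 0 * 1 + c / 2 * (2 * t)) t := fun t => by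
      have := (hasDerivAt_pow 2 t).const_mul (c / 2)
      refine (((h1 t).sub ((hasDerivAt_id t).const_mul (g' 0))).add this).congr_deriv ?_
      simp
    refine monotoneOn_of_hasDerivWithinAt_nonneg (convex_Icc _ _)
      (fun t _ => (hd t).continuousAt.continuousWithinAt)
      (fun t _ => (hd t).hasDerivWithinAt) (fun t ht => ?_)
    have ht' := interior_subset ht
    have := m1 (Set.left_mem_Icc.2 zero_le_one) ht' ht'.1
    simp only [mul_zero, add_zero] at this
    linarith
  have := m2 (Set.left_mem_Icc.2 zero_le_one) (Set.right_mem_Icc.2 zero_le_one) zero_le_one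
  simp only [mul_zero, mul_one, one_pow] at this
  norm_num at this
  linarith

lemma aux_line1 {E : Type*} [NormedAddCommGroup E] [NormedSpace ℝ E] {φ : E → ℝ}
    (h : ContDiff ℝ 2 φ) (p e : E) (t : ℝ) :
    HasDerivAt (fun t : ℝ => φ (p + t • e)) (fderiv ℝ φ (p + t • e) e) t := by
  have hl : HasDerivAt (fun t : ℝ => p + t • e) e t := by
    simpa using ((hasDerivAt_id t).smul_const e).const_add p
  exact ((h.differentiable (by norm_num)) _).hasFDerivAt.comp_hasDerivAt t hl

lemma aux_line2 {E : Type*} [NormedAddCommGroup E] [NormedSpace ℝ E] {φ : E → ℝ}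
    (h : ContDiff ℝ 2 φ) (p e : E) (t : ℝ) :
    HasDerivAt (fun t : ℝ => fderiv ℝ φ (p + t • e) e)
      (iteratedFDeriv ℝ 2 φ (p + t • e) ![e, e]) t := by
  have hl : HasDerivAt (fun t : ℝ => p + t • e) e t := by
    simpa using ((hasDerivAt_id t).smul_const e).const_add p
  have h1 : ContDiff ℝ 1 (fderiv ℝ φ) := h.fderiv_right (by norm_num)
  have h2 := ((h1.differentiable (by norm_num)) (p + t • e)).hasFDerivAt.comp_hasDerivAt t hl
  have h3 := h2.clm_apply (hasDerivAt_const t e)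
  simpa [iteratedFDeriv_two_apply] using h3

lemma aux_factor {n : ℕ} {P : Matrix (Fin n) (Fin n) ℝ} (hP : P.PosDef) :
    ∃ B : Matrix (Fin n) (Fin n) ℝ, ∀ i j, P i j = ∑ a, B a i * B a j := by
  open scoped MatrixOrder Matrix.Norms.L2Operator in
  obtain ⟨B, rfl⟩ := CStarAlgebra.nonneg_iff_eq_star_mul_self.mp hP.posSemidef.nonneg
  exact ⟨B, fun i j => by simp [Matrix.mul_apply, Matrix.star_apply]⟩

lemma aux_concave {n : ℕ} {Γ : Set (Matrix (Fin n) (Fin n) ℝ)}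
    {F : Matrix (Fin n) (Fin n) ℝ → ℝ} (hF : ConcaveOn ℝ Γ F)
    {r s : Matrix (Fin n) (Fin n) ℝ} (hr : r ∈ Γ) (hs : s ∈ Γ) {d : ℝ}
    (hd : HasDerivAt (fun t : ℝ => F (r + t • (s - r))) d 0) : F s - F r ≤ d := by
  have hc : ConcaveOn ℝ (Set.Icc (0 : ℝ) 1) (fun t : ℝ => F (r + t • (s - r))) := by
    have := (hF.comp_affineMap (AffineMap.lineMap (k := ℝ) r s)).subset
      (s := Set.Icc (0 : ℝ) 1) ?_ (convex_Icc _ _)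
    · refine this.congr fun t _ => ?_
      simp [AffineMap.lineMap_apply, add_comm]
    · intro t ht
      exact hF.1.lineMap_mem hr hs ht
  have := hc.slope_le_of_hasDerivAt (Set.left_mem_Icc.2 zero_le_one)
    (Set.right_mem_Icc.2 zero_le_one) zero_lt_one hd
  simpa [slope_def_field] using this

lemma aux_sum1 {n : ℕ} (g : Fin n → Fin n → ℝ → ℝ) (g' c : Fin n → Fin n → ℝ) (t : ℝ)
    (h : ∀ i j, HasDerivAt (g i j) (g' i j) t) :
    HasDerivAt (fun t => ∑ i, ∑ j, g i j t * c i j) (∑ i, ∑ j, g' i j * c i j) t :=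
  HasDerivAt.fun_sum fun i _ => HasDerivAt.fun_sum fun j _ => (h i j).mul_const _

lemma aux_grad {n : ℕ} {φ : (Fin n → ℝ) → ℝ} (h : ContDiff ℝ 2 φ) (p e : Fin n → ℝ) :
    ∑ k, deriv (fun t : ℝ => φ (p + t • (Pi.single k 1 : Fin n → ℝ))) 0 * e k
      = fderiv ℝ φ p e := by
  have h1 : ∀ k, deriv (fun t : ℝ => φ (p + t • (Pi.single k 1 : Fin n → ℝ))) 0
      = fderiv ℝ φ p (Pi.single k 1) := fun k => by
    simpa using (aux_line1 h p (Pi.single k 1) 0).deriv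
  simp_rw [h1]
  conv_rhs => rw [pi_eq_sum_univ' e, map_sum]
  refine Finset.sum_congr rfl fun k _ => ?_
  simp [mul_comm]

lemma aux_exp_grad {n : ℕ} {w : EuclideanSpace ℝ (Fin n) → ℝ} (hw : ContDiff ℝ 2 w) (K : ℝ)
    (x v : EuclideanSpace ℝ (Fin n)) :
    fderiv ℝ (fun y => Real.exp (K * w y)) x v
      = K * Real.exp (K * w x) * fderiv ℝ w x v := by
  have h := (((hw.differentiable (by norm_num)) x).hasFDerivAt.const_mul K).exp
  rw [h.fderiv]
  simp
  ring

lemma aux_exp_hess {n : ℕ} {w : EuclideanSpace ℝ (Fin n) → ℝ} (hw : ContDiff ℝ 2 w) (K : ℝ)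
    (x : EuclideanSpace ℝ (Fin n)) (i j : Fin n) :
    phess n (fun y => Real.exp (K * w y)) x i j
      = K * Real.exp (K * w x) * (phess n w x i j + K * (pgrad n w x i * pgrad n w x j)) := by
  simp only [phess, pgrad, Matrix.of_apply]
  simp_rw [aux_exp_grad hw]
  have h1 := ((((hw.differentiable (by norm_num)) x).hasFDerivAt.const_mul K).exp).const_mul K
  have hd : ContDiff ℝ 1 (fun y => fderiv ℝ w y (EuclideanSpace.single j 1)) :=
    (hw.fderiv_right (m := 1) (by norm_num)).clm_apply contDiff_const
  have h2 := ((hd.differentiable (by norm_num)) x).hasFDerivAt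
  rw [(h1.fun_mul h2).fderiv]
  simp
  ring

lemma aux_grad_sub {n : ℕ} {u v : EuclideanSpace ℝ (Fin n) → ℝ} (hu : ContDiff ℝ 2 u)
    (hv : ContDiff ℝ 2 v) (x : EuclideanSpace ℝ (Fin n)) :
    pgrad n (fun y => v y - u y) x = pgrad n v x - pgrad n u x := by
  ext i
  simp only [pgrad, Pi.sub_apply]
  rw [fderiv_fun_sub ((hv.differentiable (by norm_num)) x) ((hu.differentiable (by norm_num)) x)]
  simp

lemma aux_hess_sub {n : ℕ} {u v : EuclideanSpace ℝ (Fin n) → ℝ} (hu : ContDiff ℝ 2 u)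
    (hv : ContDiff ℝ 2 v) (x : EuclideanSpace ℝ (Fin n)) :
    phess n (fun y => v y - u y) x = phess n v x - phess n u x := by
  ext i j
  simp only [phess, Matrix.sub_apply, Matrix.of_apply]
  have hd : ∀ {w : EuclideanSpace ℝ (Fin n) → ℝ}, ContDiff ℝ 2 w →
      DifferentiableAt ℝ (fun y => fderiv ℝ w y (EuclideanSpace.single j 1)) x := fun hw =>
    (((hw.fderiv_right (m := 1) (by norm_num)).clm_apply contDiff_const).differentiable
      (by norm_num)) x
  have : (fun y => fderiv ℝ (fun y => v y - u y) y (EuclideanSpace.single j 1))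
      = fun y => fderiv ℝ v y (EuclideanSpace.single j 1)
        - fderiv ℝ u y (EuclideanSpace.single j 1) := by
    ext y
    exact congrFun (aux_grad_sub hu hv y) j
  rw [this, fderiv_fun_sub (hd hv) (hd hu)]
  simp

lemma aux_grad_cont {n : ℕ} {u : EuclideanSpace ℝ (Fin n) → ℝ} (hu : ContDiff ℝ 2 u) :
    Continuous (pgrad n u) := by
  refine continuous_pi fun i => ?_
  exact (hu.continuous_fderiv (by norm_num)).clm_apply continuous_const

lemma aux_key
    (n : ℕ) (Ω : Set (EuclideanSpace ℝ (Fin n)))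
    (hΩb : Bornology.IsBounded Ω)
    (A : EuclideanSpace ℝ (Fin n) → ℝ → (Fin n → ℝ) → Matrix (Fin n) (Fin n) ℝ)
    (hAp : ∀ x z i j, ContDiff ℝ 2 (fun p : Fin n → ℝ => A x z p i j))
    (hAp2cont : ∀ i j, Continuous (fun q : EuclideanSpace ℝ (Fin n) × ℝ × (Fin n → ℝ) =>
        iteratedFDeriv ℝ 2 (fun p => A q.1 q.2.1 p i j) q.2.2))
    (hAreg : ∀ x ∈ closure Ω, ∀ (z : ℝ) (p ξ η : Fin n → ℝ), (∑ i, ξ i * η i) = 0 →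
        0 ≤ iteratedDeriv 2
          (fun t : ℝ => ∑ i, ∑ j, A x z (p + t • η) i j * ξ i * ξ j) 0)
    (δbar : ℝ) (hδbar : 0 < δbar) (M₁ R R' : ℝ) :
    ∃ C : ℝ, 0 ≤ C ∧ ∀ x ∈ closure Ω, ∀ z : ℝ, |z| ≤ M₁ → ∀ p : Fin n → ℝ, ‖p‖ ≤ R →
      ∀ e : Fin n → ℝ, ‖e‖ ≤ R' → ∀ ξ : Fin n → ℝ,
      0 ≤ (∑ i, ∑ j, iteratedFDeriv ℝ 2 (fun p => A x z p i j) p ![e, e] * (ξ i * ξ j))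
        + δbar * ∑ i, ξ i ^ 2 + C * (∑ i, ξ i * e i) ^ 2 := by
  have hcpt : IsCompact ((closure Ω) ×ˢ (Metric.closedBall (0:ℝ) M₁) ×ˢ
      (Metric.closedBall (0 : Fin n → ℝ) R) ×ˢ (Metric.closedBall (0 : Fin n → ℝ) R') ×ˢ
      (Metric.sphere (0 : Fin n → ℝ) 1)) :=
    hΩb.isCompact_closure.prod ((isCompact_closedBall _ _).prod
      ((isCompact_closedBall _ _).prod ((isCompact_closedBall _ _).prod (isCompact_sphere _ _))))
  have hD : ∀ i j, Continuous (fun q : EuclideanSpace ℝ (Fin n) × ℝ × (Fin n → ℝ) ×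
      (Fin n → ℝ) × (Fin n → ℝ) =>
      iteratedFDeriv ℝ 2 (fun p => A q.1 q.2.1 p i j) q.2.2.1 ![q.2.2.2.1, q.2.2.2.1]) := by
    intro i j
    have h1 : Continuous (fun q : EuclideanSpace ℝ (Fin n) × ℝ × (Fin n → ℝ) ×
      (Fin n → ℝ) × (Fin n → ℝ) =>
      iteratedFDeriv ℝ 2 (fun p => A q.1 q.2.1 p i j) q.2.2.1) :=
      (hAp2cont i j).comp (f := fun q : EuclideanSpace ℝ (Fin n) × ℝ × (Fin n → ℝ) ×
        (Fin n → ℝ) × (Fin n → ℝ) => (q.1, q.2.1, q.2.2.1)) (by fun_prop)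
    refine h1.eval ?_
    refine continuous_pi fun a => ?_
    fin_cases a <;> simp <;> fun_prop
  obtain ⟨C, hC, h⟩ := aux_compact hcpt
    (f := fun q => (∑ i, ∑ j, iteratedFDeriv ℝ 2 (fun p => A q.1 q.2.1 p i j) q.2.2.1
        ![q.2.2.2.1, q.2.2.2.1] * (q.2.2.2.2 i * q.2.2.2.2 j)) + δbar * ∑ i, q.2.2.2.2 i ^ 2)
    (g := fun q => (∑ i, q.2.2.2.2 i * q.2.2.2.1 i) ^ 2)
    (by
      refine Continuous.add ?_ (by fun_prop)
      refine continuous_finsetSum _ fun i _ => continuous_finsetSum _ fun j _ => ?_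
      exact (hD i j).mul (by fun_prop))
    (by fun_prop) (fun q _ => sq_nonneg _)
    (by
      rintro ⟨x, z, p, e, ξ⟩ ⟨hx, hz, hp, he, hξ⟩ h0
      simp only at h0 hx hξ ⊢
      have h1 := hAreg x hx z p ξ e (by simpa using h0)
      have h2 : iteratedDeriv 2 (fun t : ℝ => ∑ i, ∑ j, A x z (p + t • e) i j * ξ i * ξ j) 0
          = ∑ i, ∑ j, iteratedFDeriv ℝ 2 (fun p => A x z p i j) p ![e, e] * (ξ i * ξ j) := by
        have e1 : (fun t : ℝ => ∑ i, ∑ j, A x z (p + t • e) i j * ξ i * ξ j)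
            = fun t : ℝ => ∑ i, ∑ j, A x z (p + t • e) i j * (ξ i * ξ j) := by
          simp only [mul_assoc]
        have e2 : deriv (fun t : ℝ => ∑ i, ∑ j, A x z (p + t • e) i j * (ξ i * ξ j))
            = fun t : ℝ => ∑ i, ∑ j, fderiv ℝ (fun p => A x z p i j) (p + t • e) e
              * (ξ i * ξ j) := by
          ext t
          exact (aux_sum1 _ _ _ t fun i j => aux_line1 (hAp x z i j) p e t).deriv
        rw [iteratedDeriv_succ, iteratedDeriv_one, e1, e2]
        have := (aux_sum1 _ _ (fun i j => ξ i * ξ j) 0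
          fun i j => aux_line2 (hAp x z i j) p e 0).deriv
        simpa using this
      rw [h2] at h1
      have h3 : 0 < ∑ i, ξ i ^ 2 := by
        have hne : ξ ≠ 0 := by
          rintro rfl
          simp at hξ
        obtain ⟨i, hi⟩ := Function.ne_iff.1 hne
        exact Finset.sum_pos' (fun i _ => sq_nonneg _) ⟨i, Finset.mem_univ _, by
          have : ξ i ≠ 0 := hi
          positivity⟩
      have := mul_pos hδbar h3
      linarith)
  refine ⟨C, hC, fun x hx z hz p hp e he ξ => ?_⟩
  by_cases hξ : ξ = 0
  · simp [hξ]
  have hn : 0 < ‖ξ‖ := norm_pos_iff.2 hξ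
  obtain ⟨s, hs, ζ, hζ, rfl⟩ : ∃ s : ℝ, 0 < s ∧ ∃ ζ : Fin n → ℝ, ‖ζ‖ = 1 ∧ ξ = s • ζ :=
    ⟨‖ξ‖, hn, ‖ξ‖⁻¹ • ξ, by simp [norm_smul, hn.ne'], by simp [smul_smul, hn.ne']⟩
  have h1 := h (x, z, p, e, ζ) ⟨hx, by simpa using hz, by simpa using hp, by simpa using he,
    by simpa using hζ⟩
  simp only at h1
  have h2 := mul_nonneg (sq_nonneg s) h1
  refine h2.trans (le_of_eq ?_)
  simp only [Pi.smul_apply, smul_eq_mul, mul_pow, mul_add]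
  congr 1
  · congr 1
    · simp only [Finset.mul_sum]
      refine Finset.sum_congr rfl fun i _ => Finset.sum_congr rfl fun j _ => ?_
      ring
    · simp only [← Finset.mul_sum]
      ring
  · have : ∑ i, s * ζ i * e i = s * ∑ i, ζ i * e i := by
      simp only [Finset.mul_sum, mul_assoc]
    rw [this]
    ring

/-- Contracted Taylor estimate. -/
lemma aux_contract {n : ℕ} (a : (Fin n → ℝ) → Matrix (Fin n) (Fin n) ℝ)
    (ha : ∀ i j, ContDiff ℝ 2 (fun p : Fin n → ℝ => a p i j))
    {P : Matrix (Fin n) (Fin n) ℝ} (hP : P.PosDef) (p e : Fin n → ℝ) (d C : ℝ)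
    (h : ∀ t ∈ Set.Icc (0 : ℝ) 1, ∀ ξ : Fin n → ℝ,
      0 ≤ (∑ i, ∑ j, iteratedFDeriv ℝ 2 (fun p => a p i j) (p + t • e) ![e, e] * (ξ i * ξ j))
        + d * ∑ i, ξ i ^ 2 + C * (∑ i, ξ i * e i) ^ 2) :
    -((d * ∑ i, P i i + C * ∑ i, ∑ j, P i j * (e i * e j)) / 2) ≤
      ∑ i, ∑ j, P i j * (a (p + e) i j - a p i j - fderiv ℝ (fun p => a p i j) p e) := by
  obtain ⟨B, hB⟩ := aux_factor hP
  have hT := aux_taylor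
    (fun t => aux_sum1 _ _ (fun i j => P i j) t fun i j => aux_line1 (ha i j) p e t)
    (fun t => aux_sum1 _ _ (fun i j => P i j) t fun i j => aux_line2 (ha i j) p e t)
    (c := d * ∑ i, P i i + C * ∑ i, ∑ j, P i j * (e i * e j)) (by
      intro t ht
      have h1 := Finset.sum_nonneg fun b (_ : b ∈ Finset.univ) => h t ht (B b)
      rw [Finset.sum_add_distrib, Finset.sum_add_distrib, ← Finset.mul_sum, ← Finset.mul_sum]
        at h1
      have e1 : ∑ b, ∑ i, ∑ j, iteratedFDeriv ℝ 2 (fun p => a p i j) (p + t • e) ![e, e]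
          * (B b i * B b j) = ∑ i, ∑ j,
          iteratedFDeriv ℝ 2 (fun p => a p i j) (p + t • e) ![e, e] * P i j := by
        rw [Finset.sum_comm]
        refine Finset.sum_congr rfl fun i _ => ?_
        rw [Finset.sum_comm]
        refine Finset.sum_congr rfl fun j _ => ?_
        rw [hB, Finset.mul_sum]
      have e2 : ∑ b, ∑ i, B b i ^ 2 = ∑ i, P i i := by
        rw [Finset.sum_comm]
        refine Finset.sum_congr rfl fun i _ => ?_
        rw [hB]
        simp only [sq]
      have e3 : ∑ b, (∑ i, B b i * e i) ^ 2 = ∑ i, ∑ j, P i j * (e i * e j) := by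
        simp only [sq, Finset.sum_mul_sum]
        rw [Finset.sum_comm]
        refine Finset.sum_congr rfl fun i _ => ?_
        rw [Finset.sum_comm]
        refine Finset.sum_congr rfl fun j _ => ?_
        rw [hB, Finset.sum_mul]
        refine Finset.sum_congr rfl fun b _ => ?_
        ring
      rw [e1, e2, e3] at h1
      linarith)
  refine hT.trans (le_of_eq ?_)
  simp only [one_smul, zero_smul, add_zero, ← Finset.sum_sub_distrib]
  refine Finset.sum_congr rfl fun i _ => Finset.sum_congr rfl fun j _ => ?_
  ring

/-- Lemma 2.1 (i), case (a): the barrier estimate (2.8) for concave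
`F` (conditions F1, F2) and regular `A`. -/
theorem barrier_estimate_concave_case
    (n : ℕ) (Ω : Set (EuclideanSpace ℝ (Fin n)))
    (hΩo : IsOpen Ω) (hΩb : Bornology.IsBounded Ω)
    (Γ : Set (Matrix (Fin n) (Fin n) ℝ))
    (hΓsym : ∀ r ∈ Γ, r.IsSymm)
    (hΓconv : Convex ℝ Γ)
    (hΓopen : ∀ r ∈ Γ, ∃ ε > 0, ∀ s : Matrix (Fin n) (Fin n) ℝ,
        s.IsSymm → (∀ i j, |s i j - r i j| < ε) → s ∈ Γ)
    (hKΓ : ∀ m : Matrix (Fin n) (Fin n) ℝ, m.PosDef → m ∈ Γ)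
    (hΓadd : ∀ r ∈ Γ, ∀ m : Matrix (Fin n) (Fin n) ℝ, m.PosDef → r + m ∈ Γ)
    (A : EuclideanSpace ℝ (Fin n) → ℝ → (Fin n → ℝ) → Matrix (Fin n) (Fin n) ℝ)
    (hAsym : ∀ x z p, (A x z p).IsSymm)
    (hAcont : Continuous (fun q : EuclideanSpace ℝ (Fin n) × ℝ × (Fin n → ℝ) =>
        A q.1 q.2.1 q.2.2))
    (hAp : ∀ x z i j, ContDiff ℝ 2 (fun p : Fin n → ℝ => A x z p i j))
    (hAp2cont : ∀ i j, Continuous (fun q : EuclideanSpace ℝ (Fin n) × ℝ × (Fin n → ℝ) =>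
        iteratedFDeriv ℝ 2 (fun p => A q.1 q.2.1 p i j) q.2.2))
    -- A is regular (co-dimension one convex in p)
    (hAreg : ∀ x ∈ closure Ω, ∀ (z : ℝ) (p ξ η : Fin n → ℝ), (∑ i, ξ i * η i) = 0 →
        0 ≤ iteratedDeriv 2
          (fun t : ℝ => ∑ i, ∑ j, A x z (p + t • η) i j * ξ i * ξ j) 0)
    (ubar : EuclideanSpace ℝ (Fin n) → ℝ) (hubar : ContDiff ℝ 2 ubar)
    (δbar : ℝ) (hδbar : 0 < δbar) (M₁ : ℝ) (hM₁ : 0 < M₁) :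
    ∃ K > 0, ∃ δ > 0,
      ∀ (F : Matrix (Fin n) (Fin n) ℝ → ℝ)
        (F' : Matrix (Fin n) (Fin n) ℝ → Matrix (Fin n) (Fin n) ℝ),
        -- F ∈ C¹(Γ) with gradient array F'
        (∀ r ∈ Γ, ∀ s : Matrix (Fin n) (Fin n) ℝ, s.IsSymm →
          HasDerivAt (fun t : ℝ => F (r + t • s)) (∑ i, ∑ j, F' r i j * s i j) 0) →
        -- F1
        (∀ r ∈ Γ, (F' r).PosDef) →
        -- F2
        ConcaveOn ℝ Γ F →
        ∀ u : EuclideanSpace ℝ (Fin n) → ℝ, ContDiff ℝ 2 u →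
          -- |u|_{1;Ω} ≤ M₁
          (∀ x ∈ closure Ω, |u x| + Real.sqrt (∑ i, pgrad n u x i ^ 2) ≤ M₁) →
          -- u admissible in Ω̄
          (∀ x ∈ closure Ω, MA n A u x ∈ Γ) →
          -- (M_u[ū] − δ̄ I)(Ω̄) ⊂ Γ
          (∀ x ∈ closure Ω,
            MAw n A u ubar x - δbar • (1 : Matrix (Fin n) (Fin n) ℝ) ∈ Γ) →
          -- conclusion: Lη ≥ δ𝒯 + K e^{K(ū−u)} (F(M_u[ū] − δ̄I) − F(M[u]))
          ∀ x ∈ Ω,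
            δ * Tcal n F' (MA n A u x) +
              K * Real.exp (K * (ubar x - u x)) *
                (F (MAw n A u ubar x - δbar • (1 : Matrix (Fin n) (Fin n) ℝ)) -
                  F (MA n A u x)) ≤
            Lop n A F' u (fun y => Real.exp (K * (ubar y - u y))) x := by
  have hcl : IsCompact (closure Ω) := hΩb.isCompact_closure
  obtain ⟨R, hR⟩ := hcl.exists_bound_of_continuousOn (aux_grad_cont hubar).continuousOn
  obtain ⟨W, hW⟩ := hcl.exists_bound_of_continuousOn hubar.continuous.continuousOn
  obtain ⟨C, hC0, hC⟩ := aux_key n Ω hΩb A hAp hAp2cont hAreg δbar hδbar M₁ (max M₁ R) (R + M₁)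
  refine ⟨C + 1, by positivity,
    (C + 1) * Real.exp ((C + 1) * (-W - M₁)) * (δbar / 2), by positivity, ?_⟩
  intro F F' hF1 hF2 hF3 u hu huM hadm hbar x hxΩ
  have hx : x ∈ closure Ω := subset_closure hxΩ
  have hM := huM x hx
  have hsq := Real.sqrt_nonneg (∑ i, pgrad n u x i ^ 2)
  have huz : |u x| ≤ M₁ := by linarith
  have hup : ‖pgrad n u x‖ ≤ M₁ := by
    refine (pi_norm_le_iff_of_nonneg hM₁.le).2 fun i => ?_
    have h1 : |pgrad n u x i| ≤ Real.sqrt (∑ i, pgrad n u x i ^ 2) := by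
      refine Real.abs_le_sqrt ?_
      exact Finset.single_le_sum (f := fun i => pgrad n u x i ^ 2)
        (fun i _ => sq_nonneg _) (Finset.mem_univ i)
    have := abs_nonneg (u x)
    rw [Real.norm_eq_abs]
    linarith
  have hubp := hR x hx
  have hubz := hW x hx
  have hr := hadm x hx
  have hs := hbar x hx
  have hP := hF2 _ hr
  set P := F' (MA n A u x) with hPdef
  set p := pgrad n u x with hp
  set q := pgrad n ubar x with hq
  set e := q - p with he
  have hpe : p + e = q := by simp [he]
  -- Taylor
  have key := aux_contract (A x (u x)) (hAp x (u x)) hP p e δbar C (by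
    intro t ht ξ
    refine hC x hx (u x) huz (p + t • e) ?_ e ?_ ξ
    · have : p + t • e ∈ Metric.closedBall (0 : Fin n → ℝ) (max M₁ R) := by
        have := (convex_closedBall (0 : Fin n → ℝ) (max M₁ R)).add_smul_sub_mem
          (x := p) (y := q) (by simp [hup]) (by simp [hubp]) ht
        exact this
      simpa using this
    · calc ‖e‖ ≤ ‖q‖ + ‖p‖ := norm_sub_le _ _
        _ ≤ R + M₁ := add_le_add hubp hup)
  rw [hpe] at key
  -- concavity
  have hconc := aux_concave hF3 hr hs (hF1 _ hr _ ((hΓsym _ hs).sub (hΓsym _ hr)))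
  rw [← hPdef] at hconc
  have hQ : 0 ≤ ∑ i, ∑ j, P i j * (e i * e j) := by
    obtain ⟨B, hB⟩ := aux_factor hP
    have e3 : ∑ b, (∑ i, B b i * e i) ^ 2 = ∑ i, ∑ j, P i j * (e i * e j) := by
      simp only [sq, Finset.sum_mul_sum]
      rw [Finset.sum_comm]
      refine Finset.sum_congr rfl fun i _ => ?_
      rw [Finset.sum_comm]
      refine Finset.sum_congr rfl fun j _ => ?_
      rw [hB, Finset.sum_mul]
      refine Finset.sum_congr rfl fun b _ => ?_
      ring
    rw [← e3]
    positivity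
  have hT : 0 ≤ ∑ i, P i i := Finset.sum_nonneg fun i _ => hP.posSemidef.diag_nonneg
  -- the identity for the operator
  have hw : ContDiff ℝ 2 (fun y => ubar y - u y) := hubar.sub hu
  have hid : Lop n A F' u (fun y => Real.exp ((C + 1) * (ubar y - u y))) x
      = (C + 1) * Real.exp ((C + 1) * (ubar x - u x)) *
        ((∑ i, ∑ j, P i j * ((MAw n A u ubar x - δbar • (1 : Matrix (Fin n) (Fin n) ℝ))
            - MA n A u x) i j) + δbar * ∑ i, P i i
          + (∑ i, ∑ j, P i j * (A x (u x) q i j - A x (u x) p i j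
            - fderiv ℝ (fun p => A x (u x) p i j) p e))
          + (C + 1) * ∑ i, ∑ j, P i j * (e i * e j)) := by
    have hg : ∀ k, pgrad n (fun y => Real.exp ((C + 1) * (ubar y - u y))) x k
        = (C + 1) * Real.exp ((C + 1) * (ubar x - u x)) * e k := fun k => by
      have := congrFun (aux_grad_sub hu hubar x) k
      rw [he, hq, hp, ← this]
      exact aux_exp_grad hw (C + 1) x _
    have hD : δbar * ∑ i, P i i
        = ∑ i, ∑ j, P i j * (δbar • (1 : Matrix (Fin n) (Fin n) ℝ)) i j := by
      simp [Matrix.one_apply, Finset.mul_sum, mul_comm]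
    rw [hD, Finset.mul_sum _ _ (C + 1)]
    simp only [Finset.mul_sum _ _ (C + 1), ← Finset.sum_add_distrib]
    rw [Finset.mul_sum]
    simp only [Lop]
    refine Finset.sum_congr rfl fun i _ => ?_
    rw [Finset.mul_sum]
    refine Finset.sum_congr rfl fun j _ => ?_
    rw [← hPdef, aux_exp_hess hw, aux_hess_sub hu hubar, aux_grad_sub hu hubar,
      ← aux_grad (hAp x (u x) i j) p e]
    have hsum : ∑ k, ApDeriv n A x (u x) (pgrad n u x) k i j
          * pgrad n (fun y => Real.exp ((C + 1) * (ubar y - u y))) x k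
        = (C + 1) * Real.exp ((C + 1) * (ubar x - u x)) *
          ∑ k, deriv (fun t : ℝ => A x (u x) (p + t • (Pi.single k 1 : Fin n → ℝ)) i j) 0
            * e k := by
      rw [Finset.mul_sum]
      refine Finset.sum_congr rfl fun k _ => ?_
      rw [hg]
      simp only [ApDeriv]
      ring
    rw [hsum, ← hp, ← hq, ← he]
    simp only [MAw, MA, Matrix.sub_apply, ← hp, ← hq]
    ring
  rw [hid]
  simp only [Tcal, ← hPdef]
  have hexp : Real.exp ((C + 1) * (-W - M₁)) ≤ Real.exp ((C + 1) * (ubar x - u x)) := by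
    refine Real.exp_le_exp.2 (mul_le_mul_of_nonneg_left ?_ (by positivity))
    rw [Real.norm_eq_abs] at hubz
    have h1 := (abs_le.1 hubz).1
    have h2 := (abs_le.1 huz).2
    linarith
  have hstep : (C + 1) * Real.exp ((C + 1) * (-W - M₁)) * (δbar / 2) * ∑ i, P i i
      ≤ (C + 1) * Real.exp ((C + 1) * (ubar x - u x)) * (δbar / 2 * ∑ i, P i i) := by
    rw [mul_assoc _ (δbar / 2)]
    gcongr
  refine (add_le_add_left hstep _).trans ?_
  rw [← mul_add]
  refine mul_le_mul_of_nonneg_left ?_ (by positivity)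
  have hCQ := mul_nonneg hC0 hQ
  linarith

end
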